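/- Olšák's Theorem. A clone C on an arbitrary set A is a Taylor clone if and only if C contains a 6-ary idempotent operation f satisfying the identities f(x,y,y,y,x,x) = f(y,x,y,x,y,x) = f(y,y,x,x,x,y) for all x, y ∈ A. -/

import Mathlib

universe u

/-- The type of finitary operations (of positive arity `n + 1`) on `A`. -/
abbrev Ops (A : Type u) : Type u := Σ n : ℕ, (Fin (n + 1) → A) → A

/-- A set of finitary operations on `A` is a clone if it contains all projection
operations and is closed under composition. -/
def IsClone {A : Type u} (C : Set (Ops A)) : Prop :=
  (∀ (n : ℕ) (i : Fin (n + 1)), (⟨n, fun x => x i⟩ : Ops A) ∈ C) ∧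
  ∀ (n m : ℕ) (f : (Fin (n + 1) → A) → A) (g : Fin (n + 1) → (Fin (m + 1) → A) → A),
    (⟨n, f⟩ : Ops A) ∈ C → (∀ i, (⟨m, g i⟩ : Ops A) ∈ C) →
    (⟨m, fun x => f fun i => g i x⟩ : Ops A) ∈ C

/-- The clone generated by a set `F` of operations: the least clone containing `F`. -/
def cloneGen {A : Type u} (F : Set (Ops A)) : Set (Ops A) :=
  ⋂₀ {C : Set (Ops A) | IsClone C ∧ F ⊆ C}

/-- The clone of all projection operations on `A`. -/
def projClone (A : Type u) : Set (Ops A) :=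
  {f : Ops A | ∃ i : Fin (f.1 + 1), f.2 = fun x => x i}

/-- A clone `M` is maximal if it is a proper subclone of the clone of all operations
and the clone of all operations is the only clone properly containing it. -/
def IsMaximalClone {A : Type u} (M : Set (Ops A)) : Prop :=
  IsClone M ∧ M ≠ Set.univ ∧
    ∀ D : Set (Ops A), IsClone D → M ⊆ D → D = M ∨ D = Set.univ

/-- A clone `C` is minimal if the clone of projections is its unique proper subclone. -/
def IsMinimalClone {A : Type u} (C : Set (Ops A)) : Prop :=
  IsClone C ∧ C ≠ projClone A ∧
    ∀ D : Set (Ops A), IsClone D → D ⊆ C → D = projClone A ∨ D = C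

/-- An `n`-ary operation `f` preserves a `k`-ary relation `ρ` if applying `f`
coordinatewise to tuples from `ρ` always yields a tuple in `ρ`. -/
def Preserves {A : Type u} {n k : ℕ} (f : (Fin n → A) → A) (ρ : Set (Fin k → A)) : Prop :=
  ∀ t : Fin n → Fin k → A, (∀ i, t i ∈ ρ) → (fun j => f fun i => t i j) ∈ ρ

/-- `Pol ρ` is the clone of all operations preserving the relation `ρ`. -/
def Pol {A : Type u} {k : ℕ} (ρ : Set (Fin k → A)) : Set (Ops A) :=
  {f : Ops A | Preserves f.2 ρ}

/-- A Taylor operation: an idempotent operation `f` of arity `f.1 + 1` such that for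
every coordinate `i` there are tuples `u, v` of indices from a two-element set,
differing at position `i`, with `f (z ∘ u) = f (z ∘ v)` for all `z`. -/
def IsTaylor {A : Type u} (f : Ops A) : Prop :=
  (∀ a : A, f.2 (fun _ => a) = a) ∧
  ∀ i : Fin (f.1 + 1), ∃ u v : Fin (f.1 + 1) → Fin 2, u i ≠ v i ∧
    ∀ z : Fin 2 → A, f.2 (fun j => z (u j)) = f.2 (fun j => z (v j))

/-! Olšák's identities hold for some member of `C` as soon as a certain ternary relation `R` on
binary operations contains a constant triple. This `R` is invariant under the given Taylor operation
`t` and contains all six non-constant triples over the two binary projections `x, y`.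

Call a sequence a walk if its triples of consecutive terms lie in `R`; a constant walk is what we
need. Let `n + 1` processes, one per coordinate of `t`, follow the alternating walk `x, y, x, y, …`.
The `k`-th process can leave it, by the Taylor identity for coordinate `k`, and then emits
`t (c, …, c, a k, …, a n)`, where `a` is the current state and `c` the current letter of the
alternating walk. Once all processes have left, the letter `c` is replaced by the output of process
`0`. The processes `1, 2, …, n` then fall one after another into step with process `0`, and by
idempotence the common walk becomes constant.
-/

/-- A finitary operation preserves a ternary relation given as a predicate of three arguments. -/
def Preserves₃ {B : Type*} {n : ℕ} (t : (Fin n → B) → B) (R : B → B → B → Prop) : Prop :=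
  Preserves t {v : Fin 3 → B | R (v 0) (v 1) (v 2)}

theorem preserves₃_iff {B : Type*} {n : ℕ} {t : (Fin n → B) → B} {R : B → B → B → Prop} :
    Preserves₃ t R ↔
      ∀ p q r : Fin n → B, (∀ l, R (p l) (q l) (r l)) → R (t p) (t q) (t r) :=
  ⟨fun h p q r hpqr => h (fun l => ![p l, q l, r l]) hpqr, fun h _ hs => h _ _ _ hs⟩

namespace Preserves₃

variable {B : Type*} {n : ℕ} {t : (Fin n → B) → B} {R : B → B → B → Prop}

theorem const_left (hR : Preserves₃ t R) (ht : ∀ b, t (fun _ => b) = b) {b : B} {q r : Fin n → B}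
    (h : ∀ l, R b (q l) (r l)) : R b (t q) (t r) := by
  simpa only [ht] using preserves₃_iff.1 hR (fun _ => b) q r h

theorem const_left₂ (hR : Preserves₃ t R) (ht : ∀ b, t (fun _ => b) = b) {b c : B} {r : Fin n → B}
    (h : ∀ l, R b c (r l)) : R b c (t r) := by
  simpa only [ht] using hR.const_left ht (q := fun _ => c) h

end Preserves₃

section Drive

variable {B : Type*} {n : ℕ}

/-- The next state of `n + 1` processes in state `a` driven by the letter `c`: process `k` applies
`t` to the state in which the processes below `k` are overwritten by `c`. -/
def drive (t : (Fin (n + 1) → B) → B) (c : B) (a : Fin (n + 1) → B) : Fin (n + 1) → B :=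
  fun k => t fun l => if l < k then c else a l

variable {t : (Fin (n + 1) → B) → B} {R : B → B → B → Prop}

theorem drive_apply_zero (c : B) (a : Fin (n + 1) → B) : drive t c a 0 = t a := by
  simp [drive]

theorem drive_apply_eq_update {c : B} {a : Fin (n + 1) → B} {k : Fin (n + 1)}
    (h : ∀ l, k < l → a l = c) : drive t c a k = t (Function.update (fun _ => c) k (a k)) := by
  refine congrArg t (funext fun l => ?_)
  rcases lt_trichotomy l k with hl | rfl | hl
  · simp [hl, hl.ne]
  · simp
  · simp [hl.not_gt, hl.ne', h l hl]

theorem Preserves₃.drive (hR : Preserves₃ t R) {c₁ c₂ c₃ : B} {p q r : Fin (n + 1) → B}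
    (hc : R c₁ c₂ c₃) (h : ∀ l, R (p l) (q l) (r l)) (k : Fin (n + 1)) :
    R (drive t c₁ p k) (drive t c₂ q k) (drive t c₃ r k) := by
  refine preserves₃_iff.1 hR _ _ _ fun l => ?_
  split_ifs
  exacts [hc, h l]

end Drive

section Feedback

variable {B : Type*} {n : ℕ}

/-- The next state of `n + 1` processes driven by the output of process `0`. -/
def feedback (t : (Fin (n + 1) → B) → B) (a : Fin (n + 1) → B) : Fin (n + 1) → B :=
  drive t (a 0) a

variable {t : (Fin (n + 1) → B) → B} {R : B → B → B → Prop} {a : Fin (n + 1) → B}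

theorem feedback_iterate_apply_eq_zero (a : Fin (n + 1) → B) {m : ℕ} {k : Fin (n + 1)}
    (hk : k.val ≤ m) : (feedback t)^[m] a k = (feedback t)^[m] a 0 := by
  induction m generalizing k with
  | zero => rw [show k = 0 from Fin.ext (Nat.le_zero.1 hk)]
  | succ m ih =>
    rw [Function.iterate_succ_apply', feedback, drive_apply_zero]
    refine congrArg t (funext fun l => ?_)
    split_ifs with hl
    · exact (ih (Nat.lt_succ_iff.1 (lt_of_lt_of_le hl hk))).symm
    · rfl

theorem isFixedPt_feedback_iterate (ht : ∀ b, t (fun _ => b) = b) (a : Fin (n + 1) → B) :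
    Function.IsFixedPt (feedback t) ((feedback t)^[n] a) := by
  have hconst : (feedback t)^[n] a = fun _ => (feedback t)^[n] a 0 :=
    funext fun k => feedback_iterate_apply_eq_zero a (Nat.lt_succ_iff.1 k.isLt)
  rw [hconst]
  exact funext fun k => by simp only [feedback, drive, ite_self, ht]

theorem Preserves₃.feedback_iterate (hR : Preserves₃ t R)
    (h : ∀ k, R (a k) (feedback t a k) (feedback t (feedback t a) k)) (m : ℕ) (k : Fin (n + 1)) :
    R ((feedback t)^[m] a k) ((feedback t)^[m + 1] a k) ((feedback t)^[m + 2] a k) := by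
  induction m generalizing k with
  | zero => exact h k
  | succ m ih =>
    simp only [Function.iterate_succ_apply' _ m, Function.iterate_succ_apply' _ (m + 1),
      Function.iterate_succ_apply' _ (m + 2)] at ih ⊢
    exact hR.drive (ih 0) ih k

theorem Preserves₃.exists_diag_of_feedback (hR : Preserves₃ t R) (ht : ∀ b, t (fun _ => b) = b)
    (h : ∀ k, R (a k) (feedback t a k) (feedback t (feedback t a) k)) : ∃ b, R b b b := by
  have hfix : feedback t ((feedback t)^[n] a) = (feedback t)^[n] a :=
    isFixedPt_feedback_iterate ht a
  have hwalk := hR.feedback_iterate h n 0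
  simp only [Function.iterate_succ_apply', hfix] at hwalk
  exact ⟨_, hwalk⟩

end Feedback

section Schedule

variable {B : Type*} {n : ℕ}

/-- The sequence `x, y, x, y, …`. -/
def alternate (x y : B) (m : ℕ) : B :=
  if Even m then x else y

theorem alternate_of_even {x y : B} {m : ℕ} (hm : Even m) : alternate x y m = x :=
  if_pos hm

theorem alternate_of_odd {x y : B} {m : ℕ} (hm : Odd m) : alternate x y m = y :=
  if_neg (Nat.not_even_iff_odd.2 hm)

theorem rel_alternate {R : B → B → B → Prop} {x y : B} (hx : R x y x) (hy : R y x y) (m : ℕ) :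
    R (alternate x y m) (alternate x y (m + 1)) (alternate x y (m + 2)) := by
  rcases Nat.even_or_odd m with hm | hm
  · rwa [alternate_of_even hm, alternate_of_odd hm.add_one, alternate_of_even (hm.add even_two)]
  · rwa [alternate_of_odd hm, alternate_of_even hm.add_one,
      alternate_of_odd (hm.add_even even_two)]

/-- The elements `g, e` lead process `k` from the alternating walk to the driven one: its walk
`…, y, x, g, e` goes on with two steps driven by `x` and `y` while the other inputs of process `k`
carry these letters too. -/
structure IsLaunch (t : (Fin n → B) → B) (R : B → B → B → Prop) (x y : B) (k : Fin n) (g e : B) :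
    Prop where
  rel_yxg : R y x g
  rel_xge : R x g e
  rel_ge : R g e (t (Function.update (fun _ => x) k e))
  rel_e : R e (t (Function.update (fun _ => x) k e))
    (t (Function.update (fun _ => y) k (t (Function.update (fun _ => x) k e))))

/-- The state at time `m` of `n + 1` processes that start with the walk `x, y, x, y, …`, which
process `k` leaves after time `4 * k` through `g k, e k`, to be driven by it from then on. Its first
two driven steps are over at time `4 * k + 4`, before any process above `k` leaves. -/
def schedule (t : (Fin (n + 1) → B) → B) (x y : B) (g e : Fin (n + 1) → B) :
    ℕ → Fin (n + 1) → B
  | 0, _ => x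
  | m + 1, k =>
    if m < 4 * k then alternate x y (m + 1)
    else if m = 4 * k then g k
    else if m = 4 * k + 1 then e k
    else drive t (alternate x y m) (schedule t x y g e m) k

variable {t : (Fin (n + 1) → B) → B} {R : B → B → B → Prop} {x y : B} {g e : Fin (n + 1) → B}

theorem schedule_of_le {m : ℕ} {k : Fin (n + 1)} (h : m ≤ 4 * k) :
    schedule t x y g e m k = alternate x y m := by
  cases m with
  | zero => exact (alternate_of_even Even.zero).symm
  | succ m => rw [schedule, if_pos (Nat.lt_of_succ_le h)]

theorem schedule_four_mul_add_one (k : Fin (n + 1)) : schedule t x y g e (4 * k + 1) k = g k := by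
  simp [schedule]

theorem schedule_four_mul_add_two (k : Fin (n + 1)) : schedule t x y g e (4 * k + 2) k = e k := by
  simp [schedule]

theorem schedule_succ {m : ℕ} {k : Fin (n + 1)} (h : 4 * k + 2 ≤ m) :
    schedule t x y g e (m + 1) k = drive t (alternate x y m) (schedule t x y g e m) k := by
  rw [schedule, if_neg (by omega), if_neg (by omega), if_neg (by omega)]

theorem schedule_succ_eq_update {m : ℕ} {k : Fin (n + 1)} (h : 4 * k + 2 ≤ m)
    (h' : m ≤ 4 * k + 4) :
    schedule t x y g e (m + 1) k =
      t (Function.update (fun _ => alternate x y m) k (schedule t x y g e m k)) := by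
  rw [schedule_succ h, drive_apply_eq_update fun l hl => schedule_of_le ?_]
  have : k.val < l.val := hl
  omega

theorem IsLaunch.rel_schedule {k : Fin (n + 1)} (h : IsLaunch t R x y k (g k) (e k)) {m : ℕ}
    (hm : 4 * k ≤ m + 1) (hm' : m ≤ 4 * k + 2) :
    R (schedule t x y g e m k) (schedule t x y g e (m + 1) k) (schedule t x y g e (m + 2) k) := by
  have heven : Even (4 * k.val) := ⟨2 * k, by ring⟩
  have hx : schedule t x y g e (4 * k) k = x := by
    rw [schedule_of_le le_rfl, alternate_of_even heven]
  have hg := schedule_four_mul_add_one (t := t) (x := x) (y := y) (g := g) (e := e) k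
  have he := schedule_four_mul_add_two (t := t) (x := x) (y := y) (g := g) (e := e) k
  have he' : schedule t x y g e (4 * k + 3) k = t (Function.update (fun _ => x) k (e k)) := by
    rw [schedule_succ_eq_update le_rfl (by omega), he, alternate_of_even (heven.add even_two)]
  have he'' : schedule t x y g e (4 * k + 4) k =
      t (Function.update (fun _ => y) k (t (Function.update (fun _ => x) k (e k)))) := by
    rw [schedule_succ_eq_update (by omega) (by omega), he',
      alternate_of_odd (heven.add_odd (by decide))]
  obtain hm | rfl | rfl | rfl :
      m + 1 = 4 * k ∨ m = 4 * k ∨ m = 4 * k + 1 ∨ m = 4 * k + 2 := by omega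
  · have hodd : Odd m := Nat.not_even_iff_odd.1 (Nat.even_add_one.1 (hm ▸ heven))
    have hy : schedule t x y g e m k = y := by
      rw [schedule_of_le (by omega), alternate_of_odd hodd]
    rw [show m + 2 = 4 * k + 1 by omega, hm, hy, hx, hg]
    exact h.rel_yxg
  · rw [hx, hg, he]
    exact h.rel_xge
  · rw [hg, he, he']
    exact h.rel_ge
  · rw [he, he', he'']
    exact h.rel_e

theorem Preserves₃.rel_schedule (hR : Preserves₃ t R) (hx : R x y x) (hy : R y x y)
    (hlaunch : ∀ k, IsLaunch t R x y k (g k) (e k)) (m : ℕ) (k : Fin (n + 1)) :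
    R (schedule t x y g e m k) (schedule t x y g e (m + 1) k) (schedule t x y g e (m + 2) k) := by
  induction m generalizing k with
  | zero =>
    rcases Nat.eq_zero_or_pos k.val with hk | hk
    · exact (hlaunch k).rel_schedule (by omega) (by omega)
    · iterate 3 rw [schedule_of_le (by omega)]
      exact rel_alternate hx hy 0
  | succ m ih =>
    obtain hm | hm | hm : m + 3 ≤ 4 * k ∨ (4 * k ≤ m + 2 ∧ m + 1 ≤ 4 * k + 2) ∨ 4 * k + 2 ≤ m := by
      omega
    · iterate 3 rw [schedule_of_le (by omega)]
      exact rel_alternate hx hy (m + 1)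
    · exact (hlaunch k).rel_schedule hm.1 hm.2
    · iterate 3 rw [schedule_succ (by omega)]
      exact hR.drive (rel_alternate hx hy m) ih k

end Schedule

section Taylor

variable {B : Type*} {n : ℕ} {R : B → B → B → Prop}

/-- The sequence `x, y, a, b, c` is a walk in `R`. If all triples of consecutive terms of a sequence
satisfy this, then the driving walk `x, y, x, y, …` may at any even time be replaced by that
sequence. -/
def WalkAfter (R : B → B → B → Prop) (x y a b c : B) : Prop :=
  R x y a ∧ R y a b ∧ R a b c

theorem Preserves₃.walkAfter {t : (Fin n → B) → B} (hR : Preserves₃ t R)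
    (ht : ∀ b, t (fun _ => b) = b) (x y : B) : Preserves₃ t (WalkAfter R x y) :=
  preserves₃_iff.2 fun p q r h =>
    ⟨hR.const_left₂ ht fun l => (h l).1, hR.const_left ht fun l => (h l).2.1,
      preserves₃_iff.1 hR p q r fun l => (h l).2.2⟩

/-- `R` contains all non-constant triples over the pair `z 0, z 1`. The indices, not the values, are
required to be non-constant, so for `z 0 = z 1` this demands a constant triple in `R`. -/
def ContainsNonconst (R : B → B → B → Prop) (z : Fin 2 → B) : Prop :=
  ∀ a b c : Fin 2, ¬(a = b ∧ b = c) → R (z a) (z b) (z c)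

theorem ContainsNonconst.of_ne_left {z : Fin 2 → B} (hz : ContainsNonconst R z) {a b : Fin 2}
    (hab : a ≠ b) (c : Fin 2) : R (z a) (z b) (z c) :=
  hz a b c fun h => hab h.1

theorem ContainsNonconst.of_ne_right {z : Fin 2 → B} (hz : ContainsNonconst R z) (a : Fin 2)
    {b c : Fin 2} (hbc : b ≠ c) : R (z a) (z b) (z c) :=
  hz a b c fun h => hbc h.2

theorem Preserves₃.exists_isLaunch {t : (Fin n → B) → B} (hR : Preserves₃ t R)
    (ht : ∀ b, t (fun _ => b) = b) {z : Fin 2 → B} (hz : ContainsNonconst R z) {k : Fin n}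
    {u v : Fin n → Fin 2} (hu : u k = 1) (hv : v k = 0)
    (huv : t (fun l => z (u l)) = t (fun l => z (v l))) :
    ∃ g e, IsLaunch t (WalkAfter R (z 0) (z 1)) (z 0) (z 1) k g e := by
  have hrev : ∀ a : Fin 2, a.rev ≠ a := by decide
  have h01 : (0 : Fin 2) ≠ 1 := by decide
  set e := t fun l => z (u l)
  set g := t fun l => z (u l).rev
  set e' := t (Function.update (fun _ => z 0) k e)
  set e'' := t (Function.update (fun _ => z 1) k e')
  have xyg : R (z 0) (z 1) g := hR.const_left₂ ht fun l => hz.of_ne_left h01 _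
  have xye : R (z 0) (z 1) e := hR.const_left₂ ht fun l => hz.of_ne_left h01 _
  have yxg : R (z 1) (z 0) g := hR.const_left₂ ht fun l => hz.of_ne_left h01.symm _
  have yxe : R (z 1) (z 0) e := hR.const_left₂ ht fun l => hz.of_ne_left h01.symm _
  have ge : ∀ a, R (z a) g e := fun a => hR.const_left ht fun l => hz.of_ne_right a (hrev _)
  have gee' : R g e e' := preserves₃_iff.1 hR _ _ _ fun l => by
    rcases eq_or_ne l k with rfl | hl
    · simpa [hu] using xye
    · simpa [hl] using hz.of_ne_left (hrev (u l)) 0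
  -- The Taylor identity is needed here, to read `e` as a value with `z 0` in coordinate `k`.
  have yee' : R (z 1) e e' := by
    rw [show e = t fun l => z (v l) from huv]
    refine hR.const_left ht fun l => ?_
    rcases eq_or_ne l k with rfl | hl
    · simpa [hv] using yxe
    · simpa [hl] using hz 1 (v l) 0 fun h => h01.symm (h.1.trans h.2)
  have ee'e'' : R e e' e'' := preserves₃_iff.1 hR _ _ _ fun l => by
    rcases eq_or_ne l k with rfl | hl
    · simpa [hu] using yee'
    · simpa [hl] using hz.of_ne_right (u l) h01
  exact ⟨g, e,
    { rel_yxg := ⟨hz.of_ne_left h01 1, hz.of_ne_right 1 h01.symm, yxg⟩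
      rel_xge := ⟨hz.of_ne_left h01 0, yxg, ge 0⟩
      rel_ge := ⟨xyg, ge 1, gee'⟩
      rel_e := ⟨xye, yee', ee'e''⟩ }⟩

theorem IsTaylor.exists_eq_one_eq_zero {f : Ops B} (hf : IsTaylor f) (k : Fin (f.1 + 1)) :
    ∃ u v : Fin (f.1 + 1) → Fin 2, u k = 1 ∧ v k = 0 ∧
      ∀ z : Fin 2 → B, f.2 (fun l => z (u l)) = f.2 (fun l => z (v l)) := by
  obtain ⟨u, v, hne, huv⟩ := hf.2 k
  obtain ⟨hu, hv⟩ | ⟨hu, hv⟩ : (u k = 1 ∧ v k = 0) ∨ (u k = 0 ∧ v k = 1) := by omega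
  · exact ⟨u, v, hu, hv, huv⟩
  · exact ⟨v, u, hv, hu, fun z => (huv z).symm⟩

theorem IsTaylor.exists_diag {f : Ops B} (hf : IsTaylor f) (hR : Preserves₃ f.2 R)
    {z : Fin 2 → B} (hz : ContainsNonconst R z) : ∃ b, R b b b := by
  obtain ⟨n, t⟩ := f
  have hlaunch : ∀ k, ∃ g e, IsLaunch t (WalkAfter R (z 0) (z 1)) (z 0) (z 1) k g e := fun k => by
    obtain ⟨u, v, hu, hv, huv⟩ := hf.exists_eq_one_eq_zero k
    exact hR.exists_isLaunch hf.1 hz hu hv (huv z)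
  choose g e hlaunch using hlaunch
  let s := schedule t (z 0) (z 1) g e
  have hs : ∀ m k, WalkAfter R (z 0) (z 1) (s m k) (s (m + 1) k) (s (m + 2) k) :=
    (hR.walkAfter hf.1 _ _).rel_schedule
      ⟨hz _ _ _ (by decide), hz _ _ _ (by decide), hz _ _ _ (by decide)⟩
      ⟨hz _ _ _ (by decide), hz _ _ _ (by decide), hz _ _ _ (by decide)⟩ hlaunch
  have hdrive : ∀ m, 4 * n + 2 ≤ m → s (m + 1) = drive t (alternate (z 0) (z 1) m) (s m) :=
    fun m hm => funext fun k => schedule_succ (by omega)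
  have hodd : s (4 * n + 3) = drive t (z 0) (s (4 * n + 2)) := by
    rw [hdrive _ le_rfl, alternate_of_even ⟨2 * n + 1, by ring⟩]
  have heven : s (4 * n + 4) = drive t (z 1) (s (4 * n + 3)) := by
    rw [hdrive _ (by omega), alternate_of_odd ⟨2 * n + 1, by ring⟩]
  have hzero : s (4 * n + 5) 0 = feedback t (s (4 * n + 4)) 0 := by
    rw [hdrive _ (by omega), feedback, drive_apply_zero, drive_apply_zero]
  obtain ⟨hxy, hy, -⟩ := hs (4 * n + 4) 0
  -- From time `4 * n + 4` on, the letters `z 0, z 1` are followed by the walk of process `0`.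
  have hwalk : ∀ k, R (s (4 * n + 3) k) (s (4 * n + 4) k) (feedback t (s (4 * n + 4)) k) := by
    have hnext := hR.drive hxy fun k => (hs (4 * n + 2) k).2.2
    rwa [← hodd, ← heven] at hnext
  refine hR.exists_diag_of_feedback (a := s (4 * n + 4)) hf.1 ?_
  have hnext := hR.drive (hzero ▸ hy) hwalk
  rwa [← heven] at hnext

theorem IsTaylor.pi {A : Type*} (ι : Type*) {f : Ops A} (hf : IsTaylor f) :
    IsTaylor (⟨f.1, fun p w => f.2 fun l => p l w⟩ : Ops (ι → A)) := by
  refine ⟨fun a => funext fun w => hf.1 (a w), fun i => ?_⟩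
  obtain ⟨u, v, hne, huv⟩ := hf.2 i
  exact ⟨u, v, hne, fun z => funext fun w => huv fun j => z j w⟩

end Taylor

section Olsak

variable {A : Type*} {C : Set (Ops A)}

/-- The patterns of variables in Olšák's identities, with `0` for `x` and `1` for `y`. The columns
of this matrix are the six non-constant triples over a two-element set. -/
def olsakPattern : Fin 3 → Fin 6 → Fin 2 :=
  ![![0, 1, 1, 1, 0, 0], ![1, 0, 1, 0, 1, 0], ![1, 1, 0, 0, 0, 1]]

theorem exists_olsakPattern_column : ∀ a b c : Fin 2, ¬(a = b ∧ b = c) →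
    ∃ i, olsakPattern 0 i = a ∧ olsakPattern 1 i = b ∧ olsakPattern 2 i = c := by
  decide

theorem olsakPattern_ne_or_ne : ∀ i : Fin 6,
    olsakPattern 0 i ≠ olsakPattern 1 i ∨ olsakPattern 1 i ≠ olsakPattern 2 i := by
  decide

theorem olsak_identities_iff {f : (Fin 6 → A) → A} :
    (∀ x y : A, f ![x, y, y, y, x, x] = f ![y, x, y, x, y, x] ∧
      f ![y, x, y, x, y, x] = f ![y, y, x, x, x, y]) ↔
    ∀ z : Fin 2 → A, f (fun j => z (olsakPattern 0 j)) = f (fun j => z (olsakPattern 1 j)) ∧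
      f (fun j => z (olsakPattern 1 j)) = f (fun j => z (olsakPattern 2 j)) := by
  have h₀ : ∀ z : Fin 2 → A, (fun j => z (olsakPattern 0 j)) =
      ![z 0, z 1, z 1, z 1, z 0, z 0] := fun z => by ext j; fin_cases j <;> rfl
  have h₁ : ∀ z : Fin 2 → A, (fun j => z (olsakPattern 1 j)) =
      ![z 1, z 0, z 1, z 0, z 1, z 0] := fun z => by ext j; fin_cases j <;> rfl
  have h₂ : ∀ z : Fin 2 → A, (fun j => z (olsakPattern 2 j)) =
      ![z 1, z 1, z 0, z 0, z 0, z 1] := fun z => by ext j; fin_cases j <;> rfl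
  simp only [h₀, h₁, h₂]
  exact ⟨fun h z => h (z 0) (z 1), fun h x y => h ![x, y]⟩

/-- The triples of binary operations obtained from the idempotent 6-ary members of `C` by the three
identifications of variables that occur in Olšák's identities. A constant triple comes from an
operation satisfying these identities. -/
def OlsakRel (C : Set (Ops A)) (h₀ h₁ h₂ : (Fin 2 → A) → A) : Prop :=
  ∃ f : (Fin 6 → A) → A, (⟨5, f⟩ : Ops A) ∈ C ∧ (∀ a : A, f (fun _ => a) = a) ∧
    ∀ z : Fin 2 → A, h₀ z = f (fun j => z (olsakPattern 0 j)) ∧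
      h₁ z = f (fun j => z (olsakPattern 1 j)) ∧ h₂ z = f (fun j => z (olsakPattern 2 j))

theorem IsClone.preserves₃_olsakRel (hC : IsClone C) {f : Ops A} (hfC : f ∈ C)
    (hf : ∀ a, f.2 (fun _ => a) = a) :
    Preserves₃ (fun (p : Fin (f.1 + 1) → (Fin 2 → A) → A) z => f.2 fun l => p l z)
      (OlsakRel C) := by
  refine preserves₃_iff.2 fun p q r h => ?_
  choose s hsC hs hpqr using h
  refine ⟨fun a => f.2 fun l => s l a, hC.2 f.1 5 f.2 s hfC hsC, fun a => ?_, fun z => ?_⟩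
  · simp only [hs, hf]
  · simp only [fun l => (hpqr l z).1, fun l => (hpqr l z).2.1, fun l => (hpqr l z).2.2, and_self]

theorem IsClone.containsNonconst_olsakRel (hC : IsClone C) :
    ContainsNonconst (OlsakRel C) fun i z => z i := by
  intro a b c h
  obtain ⟨i, rfl, rfl, rfl⟩ := exists_olsakPattern_column a b c h
  exact ⟨fun a => a i, hC.1 5 i, fun _ => rfl, fun _ => ⟨rfl, rfl, rfl⟩⟩

theorem isTaylor_of_olsak_identities {f : (Fin 6 → A) → A} (hf : ∀ a : A, f (fun _ => a) = a)
    (h : ∀ x y : A, f ![x, y, y, y, x, x] = f ![y, x, y, x, y, x] ∧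
      f ![y, x, y, x, y, x] = f ![y, y, x, x, x, y]) : IsTaylor (⟨5, f⟩ : Ops A) := by
  rw [olsak_identities_iff] at h
  refine ⟨hf, fun i => ?_⟩
  rcases olsakPattern_ne_or_ne i with hi | hi
  exacts [⟨_, _, hi, fun z => (h z).1⟩, ⟨_, _, hi, fun z => (h z).2⟩]

end Olsak

/-- **Olšák's Theorem.**  A clone `C` on an arbitrary set `A` contains a Taylor
operation if and only if `C` contains a 6-ary idempotent operation `f` satisfying
`f(x,y,y,y,x,x) = f(y,x,y,x,y,x) = f(y,y,x,x,x,y)` for all `x, y`. -/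
theorem olsak_taylor {A : Type u} (C : Set (Ops A)) (hC : IsClone C) :
    (∃ f : Ops A, f ∈ C ∧ IsTaylor f) ↔
      ∃ f : (Fin 6 → A) → A, (⟨5, f⟩ : Ops A) ∈ C ∧
        (∀ a : A, f (fun _ => a) = a) ∧
        ∀ x y : A, f ![x, y, y, y, x, x] = f ![y, x, y, x, y, x] ∧
          f ![y, x, y, x, y, x] = f ![y, y, x, x, x, y] := by
  constructor
  · rintro ⟨t, htC, ht⟩
    obtain ⟨b, f, hfC, hf, hb⟩ := (ht.pi (Fin 2 → A)).exists_diag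
      (hC.preserves₃_olsakRel htC ht.1) hC.containsNonconst_olsakRel
    refine ⟨f, hfC, hf, olsak_identities_iff.2 fun z => ?_⟩
    obtain ⟨h₀, h₁, h₂⟩ := hb z
    exact ⟨h₀.symm.trans h₁, h₁.symm.trans h₂⟩
  · rintro ⟨f, hfC, hf, h⟩
    exact ⟨⟨5, f⟩, hfC, isTaylor_of_olsak_identities hf h⟩
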